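/- arXiv:2207.01632 — 2 statements merged into one kernel-verified Lean document; each statement's English description precedes it below -/
import Mathlib

section
/- Every almost pseudoreflexive polytope is canonical: if ∇ is a lattice polytope with 0 in its interior such that the origin is an interior point of [∇*], then the origin is the unique interior lattice point of ∇. -/
open Set

/-- A lattice point of `ℤ^d ⊆ ℝ^d`. -/
def IsLatticePoint {d : ℕ} (x : Fin d → ℝ) : Prop := ∀ i, ∃ n : ℤ, x i = (n : ℝ)

/-- A lattice polytope: the convex hull of finitely many lattice points. -/
def IsLatticePolytope {d : ℕ} (P : Set (Fin d → ℝ)) : Prop :=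
  ∃ S : Finset (Fin d → ℝ), (∀ x ∈ S, IsLatticePoint x) ∧ P = convexHull ℝ (S : Set (Fin d → ℝ))

/-- The polar dual `P* = {u | ⟨u,v⟩ ≥ -1 for all v ∈ P}`. -/
def polarDual {d : ℕ} (P : Set (Fin d → ℝ)) : Set (Fin d → ℝ) :=
  {u | ∀ v ∈ P, (-1 : ℝ) ≤ ∑ i, u i * v i}

/-- `[P]`: the convex hull of the lattice points of `P`. -/
def latticeHull {d : ℕ} (P : Set (Fin d → ℝ)) : Set (Fin d → ℝ) :=
  convexHull ℝ {x ∈ P | IsLatticePoint x}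

/-- A primitive lattice point. -/
def IsPrimitivePt {d : ℕ} (x : Fin d → ℝ) : Prop :=
  IsLatticePoint x ∧ x ≠ 0 ∧
    ∀ (n : ℕ) (u : Fin d → ℝ), IsLatticePoint u → x = n • u → n = 1

/-- A Fano polytope: a lattice polytope with the origin as interior point,
all of whose vertices are primitive lattice points. -/
def IsFanoPolytope {d : ℕ} (P : Set (Fin d → ℝ)) : Prop :=
  IsLatticePolytope P ∧ 0 ∈ interior P ∧ ∀ v ∈ Set.extremePoints ℝ P, IsPrimitivePt v

/-- Canonical: the origin is the unique interior lattice point. -/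
def IsCanonical {d : ℕ} (P : Set (Fin d → ℝ)) : Prop :=
  ∀ x ∈ interior P, IsLatticePoint x → x = 0

/-- Terminal: the lattice points are exactly the vertices together with the origin. -/
def IsTerminal {d : ℕ} (P : Set (Fin d → ℝ)) : Prop :=
  {x ∈ P | IsLatticePoint x} = Set.extremePoints ℝ P ∪ {0}

/-- From an interior point one can move a positive distance in any direction. -/
lemma exists_pos_add_smul_mem_of_mem_interior {d : ℕ} {s : Set (Fin d → ℝ)} {a : Fin d → ℝ}
    (ha : a ∈ interior s) (v : Fin d → ℝ) : ∃ ε : ℝ, 0 < ε ∧ a + ε • v ∈ s := by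
  have hcont : ContinuousAt (fun t : ℝ => a + t • v) 0 := by fun_prop
  have hmem : s ∈ nhds (a + (0 : ℝ) • v) := by
    simpa using mem_interior_iff_mem_nhds.mp ha
  obtain ⟨δ, hδ, hball⟩ := Metric.mem_nhds_iff.mp (hcont hmem)
  refine ⟨δ / 2, half_pos hδ, hball ?_⟩
  rw [Metric.mem_ball, Real.dist_eq, sub_zero, abs_of_pos (half_pos hδ)]
  exact half_lt_self hδ

/-- The pairing of two lattice points is an integer. -/
lemma IsLatticePoint.exists_int_pairing {d : ℕ} {u x : Fin d → ℝ}
    (hu : IsLatticePoint u) (hx : IsLatticePoint x) : ∃ n : ℤ, ∑ i, u i * x i = n := by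
  choose m hm using hu
  choose n hn using hx
  exact ⟨∑ i, m i * n i, by push_cast; simp only [hm, hn]⟩

/-- Lattice points of the polar dual pair nonnegatively with interior lattice points. -/
lemma pairing_nonneg_of_mem_polarDual {d : ℕ} {P : Set (Fin d → ℝ)} {u x : Fin d → ℝ}
    (hu : u ∈ polarDual P) (hul : IsLatticePoint u) (hx : x ∈ interior P)
    (hxl : IsLatticePoint x) : 0 ≤ ∑ i, u i * x i := by
  obtain ⟨ε, hε, hmem⟩ := exists_pos_add_smul_mem_of_mem_interior hx x
  obtain ⟨n, hn⟩ := hul.exists_int_pairing hxl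
  have hscale : ∑ i, u i * (x + ε • x) i = (1 + ε) * ∑ i, u i * x i := by
    rw [Finset.mul_sum]
    refine Finset.sum_congr rfl fun i _ => ?_
    simp only [Pi.add_apply, Pi.smul_apply, smul_eq_mul]
    ring
  have hle := hu _ hmem
  rw [hscale, hn] at hle
  rw [hn]
  by_contra hneg
  have hn1 : (n : ℝ) ≤ -1 := by
    have : n < 0 := by exact_mod_cast not_le.mp hneg
    exact_mod_cast Int.le_sub_one_of_lt this
  nlinarith

/-- The pairing with an interior lattice point is nonnegative on `[P*]`. -/
lemma pairing_nonneg_of_mem_latticeHull_polarDual {d : ℕ} {P : Set (Fin d → ℝ)}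
    {w x : Fin d → ℝ} (hw : w ∈ latticeHull (polarDual P)) (hx : x ∈ interior P)
    (hxl : IsLatticePoint x) : 0 ≤ ∑ i, w i * x i := by
  have hconv : Convex ℝ {w : Fin d → ℝ | 0 ≤ ∑ i, w i * x i} := by
    refine convex_halfSpace_ge (f := fun w : Fin d → ℝ => ∑ i, w i * x i) ⟨?_, ?_⟩ 0
    · intro a b
      simp [add_mul, Finset.sum_add_distrib]
    · intro c a
      simp [Finset.mul_sum, mul_assoc]
  exact convexHull_min (fun u hu => pairing_nonneg_of_mem_polarDual hu.1 hu.2 hx hxl) hconv hw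

/-- Every almost pseudoreflexive polytope is canonical. -/
theorem almost_pseudoreflexive_canonical {d : ℕ} (P : Set (Fin d → ℝ))
    (hP : IsLatticePolytope P) (h0 : 0 ∈ interior P)
    (hapr : 0 ∈ interior (latticeHull (polarDual P))) :
    IsCanonical P := by
  intro x hx hxl
  obtain ⟨ε, hε, hmem⟩ := exists_pos_add_smul_mem_of_mem_interior hapr (-x)
  have hle := pairing_nonneg_of_mem_latticeHull_polarDual hmem hx hxl
  have hscale : ∑ i, (0 + ε • -x) i * x i = -(ε * ∑ i, x i * x i) := by
    simp [Finset.mul_sum, mul_assoc]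
  rw [hscale] at hle
  have hsum : ∑ i, x i * x i = 0 :=
    le_antisymm (by nlinarith) (Finset.sum_nonneg fun i _ => mul_self_nonneg (x i))
  funext i
  exact mul_self_eq_zero.mp
    ((Finset.sum_eq_zero_iff_of_nonneg fun i _ => mul_self_nonneg (x i)).mp hsum i
      (Finset.mem_univ i))
end

section
/- Up to unimodular equivalence (the action of GL(2,Z)), every terminal Fano polygon admitting a Mori fiber structure is one of ∇_{-∞} = Conv((1,0),(0,1),(-1,-1)), ∇_0 = Conv((1,0),(0,1),(-1,0),(0,-1)), or ∇_1 = Conv((1,0),(0,1),(-1,0),(-1,-1)). -/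
open Set

/-- The Fano polygon `∇_{-∞} = Conv(e₁, e₂, -e₁-e₂)`, corresponding to `ℙ²`. -/
def nablaInf : Set (Fin 2 → ℝ) :=
  convexHull ℝ ({![1,0], ![0,1], ![-1,-1]} : Set (Fin 2 → ℝ))

/-- The Fano polygon `∇_m = Conv(e₁, e₂, -e₁, -m·e₁-e₂)`, corresponding to `𝔽_m`. -/
def nabla (m : ℕ) : Set (Fin 2 → ℝ) :=
  convexHull ℝ ({![1,0], ![0,1], ![-1,0], ![-(m:ℝ),-1]} : Set (Fin 2 → ℝ))

/-- Primitivity of a point with respect to an abstract lattice `Λ`. -/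
def IsPrimitiveIn {W : Type*} [AddCommMonoid W] (Λ : Set W) (w : W) : Prop :=
  w ∈ Λ ∧ w ≠ 0 ∧ ∀ (n : ℕ) (u : W), u ∈ Λ → w = n • u → n = 1

/-- The set of primitive lattice points of a polygon. -/
def primPts (P : Set (Fin 2 → ℝ)) : Set (Fin 2 → ℝ) := {v | IsPrimitivePt v ∧ v ∈ P}

/-- A Mori fiber structure on (the primitive generating set of) a Fano polygon `P`:
a fiber structure `A_f ⊆ A = P ∩ N_prim` (i.e. `A_f` is nonempty, equals the
intersection of `A` with the linear span `L` of `A_f`, and generates `L` as a cone)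
which is irreducible (`|A| = |A_f| + |A_b|`, where the base `A_b` consists of the
primitive generators, with respect to the image lattice, of the rays spanned by the
images of `A \ A_f` in `ℝ² / L`) and satisfies `|A_f| = dim L + 1`. -/
def HasMoriFiberStructure (P : Set (Fin 2 → ℝ)) : Prop :=
  ∃ Af : Set (Fin 2 → ℝ), Af ⊆ primPts P ∧ Af.Nonempty ∧
    Af = {v ∈ primPts P | v ∈ Submodule.span ℝ Af} ∧
    (∀ x ∈ Submodule.span ℝ Af, ∃ s : Finset (Fin 2 → ℝ), (s : Set (Fin 2 → ℝ)) ⊆ Af ∧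
      ∃ c : (Fin 2 → ℝ) → ℝ, (∀ v, 0 ≤ c v) ∧ x = ∑ v ∈ s, c v • v) ∧
    Af.ncard = Module.finrank ℝ (Submodule.span ℝ Af) + 1 ∧
    (primPts P).ncard = Af.ncard +
      {w : (Fin 2 → ℝ) ⧸ Submodule.span ℝ Af |
        IsPrimitiveIn ((Submodule.span ℝ Af).mkQ '' {x | IsLatticePoint x}) w ∧
        ∃ v ∈ primPts P \ Af, ∃ t : ℝ, 0 < t ∧
          (Submodule.span ℝ Af).mkQ v = t • w}.ncard

/-- The determinant of two plane vectors. -/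
def planeDet (a b : Fin 2 → ℝ) : ℝ := a 0 * b 1 - a 1 * b 0

theorem eq_smul_add_smul_of_planeDet_ne_zero {a b : Fin 2 → ℝ} (h : planeDet a b ≠ 0)
    (x : Fin 2 → ℝ) :
    x = (planeDet x b / planeDet a b) • a + (planeDet a x / planeDet a b) • b := by
  ext i
  fin_cases i <;> simp <;> field_simp <;> simp [planeDet] <;> ring

theorem coeff_unique_of_planeDet_ne_zero {a b : Fin 2 → ℝ} (h : planeDet a b ≠ 0)
    {s t s' t' : ℝ} (hst : s • a + t • b = s' • a + t' • b) : s = s' ∧ t = t' := by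
  have h0 := congrFun hst 0
  have h1 := congrFun hst 1
  simp at h0 h1
  unfold planeDet at h
  constructor <;> apply mul_right_cancel₀ h
  · linear_combination b 1 * h0 - b 0 * h1
  · linear_combination a 0 * h1 - a 1 * h0

theorem IsLatticePoint.add {d : ℕ} {x y : Fin d → ℝ} (hx : IsLatticePoint x)
    (hy : IsLatticePoint y) : IsLatticePoint (x + y) := fun i => by
  obtain ⟨m, hm⟩ := hx i
  obtain ⟨n, hn⟩ := hy i
  exact ⟨m + n, by simp [hm, hn]⟩

theorem IsLatticePoint.zsmul {d : ℕ} {x : Fin d → ℝ} (hx : IsLatticePoint x) (k : ℤ) :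
    IsLatticePoint ((k : ℝ) • x) := fun i => by
  obtain ⟨m, hm⟩ := hx i
  exact ⟨k * m, by simp [hm]⟩

theorem IsLatticePoint.exists_planeDet_eq {a b : Fin 2 → ℝ} (ha : IsLatticePoint a)
    (hb : IsLatticePoint b) : ∃ n : ℤ, planeDet a b = n := by
  obtain ⟨a0, ha0⟩ := ha 0
  obtain ⟨a1, ha1⟩ := ha 1
  obtain ⟨b0, hb0⟩ := hb 0
  obtain ⟨b1, hb1⟩ := hb 1
  exact ⟨a0 * b1 - a1 * b0, by simp [planeDet, *]⟩

theorem IsFanoPolytope.convex {d : ℕ} {P : Set (Fin d → ℝ)} (hP : IsFanoPolytope P) :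
    Convex ℝ P := by
  obtain ⟨S, -, rfl⟩ := hP.1
  exact convex_convexHull ℝ _

theorem IsFanoPolytope.zero_mem {d : ℕ} {P : Set (Fin d → ℝ)} (hP : IsFanoPolytope P) :
    0 ∈ P :=
  interior_subset hP.2.1

theorem IsLatticePolytope.convexHull_extremePoints {d : ℕ} {P : Set (Fin d → ℝ)}
    (hP : IsLatticePolytope P) : convexHull ℝ (extremePoints ℝ P) = P := by
  obtain ⟨S, -, rfl⟩ := hP
  have hfin : (extremePoints ℝ (convexHull ℝ (S : Set (Fin d → ℝ)))).Finite :=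
    S.finite_toSet.subset extremePoints_convexHull_subset
  rw [← (hfin.isClosed_convexHull ℝ).closure_eq]
  exact closure_convexHull_extremePoints (S.finite_toSet.isCompact_convexHull ℝ)
    (convex_convexHull ℝ _)

theorem primPts_eq_extremePoints {P : Set (Fin 2 → ℝ)} (hFano : IsFanoPolytope P)
    (hTerm : IsTerminal P) : primPts P = extremePoints ℝ P := by
  ext v
  constructor
  · rintro ⟨⟨hl, h0, -⟩, hv⟩
    have : v ∈ extremePoints ℝ P ∪ {0} := hTerm ▸ (⟨hv, hl⟩ : v ∈ {x ∈ P | IsLatticePoint x})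
    simpa [h0] using this
  · intro hv
    exact ⟨hFano.2.2 v hv, hv.1⟩

/-- A linear functional that is nonzero takes a positive value at some vertex. -/
theorem exists_extremePoint_planeDet_pos {P : Set (Fin 2 → ℝ)} (hFano : IsFanoPolytope P)
    {a : Fin 2 → ℝ} (ha : a ≠ 0) : ∃ v ∈ extremePoints ℝ P, 0 < planeDet a v := by
  by_contra! hneg
  have hhalf : Convex ℝ {x : Fin 2 → ℝ | planeDet a x ≤ 0} := by
    intro x hx y hy s t hs ht _
    simp only [planeDet, mem_ofPred_eq, Pi.add_apply, Pi.smul_apply, smul_eq_mul] at *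
    nlinarith [mul_nonneg hs (neg_nonneg.2 hx), mul_nonneg ht (neg_nonneg.2 hy)]
  have hP : P ⊆ {x : Fin 2 → ℝ | planeDet a x ≤ 0} := by
    rw [← hFano.1.convexHull_extremePoints]
    exact convexHull_min hneg hhalf
  have hcont : Filter.Tendsto (fun t : ℝ => t • (![-a 1, a 0] : Fin 2 → ℝ))
      (nhdsWithin 0 (Ioi 0)) (nhds 0) := by
    have : Continuous (fun t : ℝ => t • (![-a 1, a 0] : Fin 2 → ℝ)) := by fun_prop
    simpa using (this.tendsto 0).mono_left nhdsWithin_le_nhds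
  obtain ⟨t, ht, htpos⟩ :=
    ((hcont.eventually (mem_interior_iff_mem_nhds.1 hFano.2.1)).and self_mem_nhdsWithin).exists
  have h := hP ht
  simp only [planeDet, mem_ofPred_eq, Pi.smul_apply, smul_eq_mul, Matrix.cons_val_zero,
    Matrix.cons_val_one] at h
  have hsq : 0 < a 0 ^ 2 + a 1 ^ 2 := by
    by_contra! hle
    apply ha
    have h0 : a 0 = 0 := by nlinarith [sq_nonneg (a 0), sq_nonneg (a 1)]
    have h1 : a 1 = 0 := by nlinarith [sq_nonneg (a 0), sq_nonneg (a 1)]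
    ext i
    fin_cases i <;> simp [h0, h1]
  nlinarith [mul_pos (mem_Ioi.1 htpos) hsq]

theorem exists_extremePoint_planeDet_neg {P : Set (Fin 2 → ℝ)} (hFano : IsFanoPolytope P)
    {a : Fin 2 → ℝ} (ha : a ≠ 0) : ∃ v ∈ extremePoints ℝ P, planeDet a v < 0 := by
  obtain ⟨v, hv, h⟩ := exists_extremePoint_planeDet_pos hFano (neg_ne_zero.2 ha)
  refine ⟨v, hv, ?_⟩
  simp only [planeDet, Pi.neg_apply] at *
  linarith

/-- The triangle spanned by the origin and two vertices of a terminal polygon contains no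
further lattice points. -/
theorem lattice_coeff_of_isTerminal {P : Set (Fin 2 → ℝ)} (hFano : IsFanoPolytope P)
    (hTerm : IsTerminal P) {a b : Fin 2 → ℝ} (ha : a ∈ extremePoints ℝ P)
    (hb : b ∈ extremePoints ℝ P) (hab : planeDet a b ≠ 0) {s t : ℝ} (hs : 0 ≤ s) (ht : 0 ≤ t)
    (hst : s + t ≤ 1) (hl : IsLatticePoint (s • a + t • b)) :
    (s = 0 ∧ t = 0) ∨ (s = 1 ∧ t = 0) ∨ (s = 0 ∧ t = 1) := by
  have hsub : ({0, a, b} : Set (Fin 2 → ℝ)) ⊆ P := by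
    rintro x (rfl | rfl | rfl)
    exacts [hFano.zero_mem, ha.1, hb.1]
  have hhull : s • a + t • b ∈ convexHull ℝ ({0, a, b} : Set (Fin 2 → ℝ)) := by
    have h := (convex_convexHull ℝ ({0, a, b} : Set (Fin 2 → ℝ))).sum_mem
      (t := Finset.univ) (w := ![1 - s - t, s, t]) (z := ![0, a, b])
      (by intro i _; fin_cases i <;> simp <;> linarith) (by simp [Fin.sum_univ_three]; ring)
      (by intro i _; apply subset_convexHull; fin_cases i <;> simp)
    simpa [Fin.sum_univ_three] using h
  have hP := convexHull_min hsub hFano.convex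
  have hmem : s • a + t • b = 0 ∨ s • a + t • b = a ∨ s • a + t • b = b := by
    have h : s • a + t • b ∈ extremePoints ℝ P ∪ {0} :=
      hTerm ▸ (⟨hP hhull, hl⟩ : _ ∈ {x ∈ P | IsLatticePoint x})
    rcases h with h | h
    · simpa using extremePoints_convexHull_subset
        (inter_extremePoints_subset_extremePoints_of_subset hP ⟨hhull, h⟩)
    · exact Or.inl h
  rcases hmem with h | h | h
  · exact .inl (coeff_unique_of_planeDet_ne_zero hab (by simpa using h))
  · exact .inr (.inl (coeff_unique_of_planeDet_ne_zero hab (by simpa using h)))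
  · exact .inr (.inr (coeff_unique_of_planeDet_ne_zero hab (by simpa using h)))

/-- Linearly independent vertices of a terminal polygon span the lattice. -/
theorem exists_int_coeff_of_isTerminal {P : Set (Fin 2 → ℝ)} (hFano : IsFanoPolytope P)
    (hTerm : IsTerminal P) {a b : Fin 2 → ℝ} (ha : a ∈ extremePoints ℝ P)
    (hb : b ∈ extremePoints ℝ P) (hab : planeDet a b ≠ 0) {x : Fin 2 → ℝ}
    (hx : IsLatticePoint x) : ∃ m n : ℤ, x = (m : ℝ) • a + (n : ℝ) • b := by
  have hla := (hFano.2.2 a ha).1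
  have hlb := (hFano.2.2 b hb).1
  have hxeq := eq_smul_add_smul_of_planeDet_ne_zero hab x
  set s := planeDet x b / planeDet a b
  set t := planeDet a x / planeDet a b
  have hfract : IsLatticePoint (Int.fract s • a + Int.fract t • b) := by
    have h := (hx.add (hla.zsmul (-⌊s⌋))).add (hlb.zsmul (-⌊t⌋))
    convert h using 1
    rw [hxeq, ← Int.self_sub_floor, ← Int.self_sub_floor]
    push_cast
    module
  have hs0 := Int.fract_nonneg s
  have ht0 := Int.fract_nonneg t
  have hs1 := Int.fract_lt_one s
  have ht1 := Int.fract_lt_one t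
  have hzero : Int.fract s = 0 ∧ Int.fract t = 0 := by
    rcases le_or_gt (Int.fract s + Int.fract t) 1 with hle | hgt
    · rcases lattice_coeff_of_isTerminal hFano hTerm ha hb hab hs0 ht0 hle hfract with
        h | h | h
      · exact h
      · linarith
      · linarith
    · have hl : IsLatticePoint ((1 - Int.fract s) • a + (1 - Int.fract t) • b) := by
        convert (hla.add hlb).add (hfract.zsmul (-1)) using 1
        push_cast
        module
      rcases lattice_coeff_of_isTerminal hFano hTerm ha hb hab (by linarith) (by linarith)
        (by linarith) hl with h | h | h <;> linarith
  refine ⟨⌊s⌋, ⌊t⌋, ?_⟩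
  rwa [← Int.self_sub_fract, ← Int.self_sub_fract, hzero.1, hzero.2, sub_zero, sub_zero]

theorem planeDet_eq_one_or_neg_one {P : Set (Fin 2 → ℝ)} (hFano : IsFanoPolytope P)
    (hTerm : IsTerminal P) {a b : Fin 2 → ℝ} (ha : a ∈ extremePoints ℝ P)
    (hb : b ∈ extremePoints ℝ P) (hab : planeDet a b ≠ 0) :
    planeDet a b = 1 ∨ planeDet a b = -1 := by
  have h1 : IsLatticePoint (![1, 0] : Fin 2 → ℝ) := fun i => by
    fin_cases i
    exacts [⟨1, by simp⟩, ⟨0, by simp⟩]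
  have h2 : IsLatticePoint (![0, 1] : Fin 2 → ℝ) := fun i => by
    fin_cases i
    exacts [⟨0, by simp⟩, ⟨1, by simp⟩]
  obtain ⟨m, n, hmn⟩ := exists_int_coeff_of_isTerminal hFano hTerm ha hb hab h1
  obtain ⟨p, q, hpq⟩ := exists_int_coeff_of_isTerminal hFano hTerm ha hb hab h2
  obtain ⟨D, hD⟩ := (hFano.2.2 a ha).1.exists_planeDet_eq (hFano.2.2 b hb).1
  have hmul : ((m * q - n * p : ℤ) : ℝ) * D = 1 := by
    have e1 := congrFun hmn 0
    have e2 := congrFun hmn 1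
    have e3 := congrFun hpq 0
    have e4 := congrFun hpq 1
    simp at e1 e2 e3 e4
    rw [← hD, planeDet]
    push_cast
    linear_combination (-(p * a 1) - q * b 1) * e1 + (p * a 0 + q * b 0) * e2 - e4
  rw [hD]
  rcases Int.eq_one_or_neg_one_of_mul_eq_one' (by exact_mod_cast hmul) with h | h
  · left; simp [h.2]
  · right; simp [h.2]

/-- A lattice basis is carried to the standard basis by an integral unimodular matrix. -/
theorem exists_unimodular_standardizing {a b : Fin 2 → ℝ} (ha : IsLatticePoint a)
    (hb : IsLatticePoint b) (hab : planeDet a b = 1 ∨ planeDet a b = -1) :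
    ∃ g : Matrix (Fin 2) (Fin 2) ℤ, IsUnit g.det ∧ ∀ s t : ℝ,
      (g.map (Int.cast : ℤ → ℝ)).mulVec (s • a + t • b) = ![s, t] := by
  obtain ⟨a0, ha0⟩ := ha 0
  obtain ⟨a1, ha1⟩ := ha 1
  obtain ⟨b0, hb0⟩ := hb 0
  obtain ⟨b1, hb1⟩ := hb 1
  have hD : ∃ D : ℤ, D = a0 * b1 - a1 * b0 ∧ D * D = 1 := by
    refine ⟨_, rfl, ?_⟩
    have : ((a0 * b1 - a1 * b0 : ℤ) : ℝ) = planeDet a b := by simp [planeDet, *]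
    rcases hab with h | h <;> rw [h] at this
    · have h' : a0 * b1 - a1 * b0 = 1 := by exact_mod_cast this
      simp [h']
    · have h' : a0 * b1 - a1 * b0 = -1 := by exact_mod_cast this
      simp [h']
  obtain ⟨D, hD, hDD⟩ := hD
  have hDD' : (D : ℝ) * D = 1 := by exact_mod_cast hDD
  have hD' : (D : ℝ) = a0 * b1 - a1 * b0 := by exact_mod_cast hD
  refine ⟨!![D * b1, -(D * b0); -(D * a1), D * a0], ?_, fun s t => ?_⟩
  · rw [Matrix.det_fin_two_of]
    exact IsUnit.of_mul_eq_one D (by linear_combination (D * D + 1) * hDD - D ^ 3 * hD)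
  · ext i
    fin_cases i
    · simp [Matrix.mulVec, dotProduct, Fin.sum_univ_two, ha0, ha1, hb0, hb1]
      linear_combination s * hDD' - s * D * hD'
    · simp [Matrix.mulVec, dotProduct, Fin.sum_univ_two, ha0, ha1, hb0, hb1]
      linear_combination t * hDD' - t * D * hD'

theorem image_mulVec_eq_convexHull {P : Set (Fin 2 → ℝ)} (hP : IsLatticePolytope P)
    (M : Matrix (Fin 2) (Fin 2) ℝ) :
    (fun x => M.mulVec x) '' P =
      convexHull ℝ ((fun x => M.mulVec x) '' extremePoints ℝ P) := by
  conv_lhs => rw [← hP.convexHull_extremePoints]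
  exact M.mulVecLin.image_convexHull _

theorem exists_image_eq_nablaInf {P : Set (Fin 2 → ℝ)} (hFano : IsFanoPolytope P)
    (hTerm : IsTerminal P) (hcard : (extremePoints ℝ P).ncard = 3) :
    ∃ g : Matrix (Fin 2) (Fin 2) ℤ, IsUnit g.det ∧
      (fun x => (g.map (Int.cast : ℤ → ℝ)).mulVec x) '' P = nablaInf := by
  obtain ⟨a, b, c, -, -, -, hV⟩ := ncard_eq_three.1 hcard
  have ha : a ∈ extremePoints ℝ P := by simp [hV]
  have hb : b ∈ extremePoints ℝ P := by simp [hV]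
  have hc : c ∈ extremePoints ℝ P := by simp [hV]
  have hsign : ∀ x ∈ extremePoints ℝ P,
      (0 < planeDet x a ∨ 0 < planeDet x b ∨ 0 < planeDet x c) ∧
      (planeDet x a < 0 ∨ planeDet x b < 0 ∨ planeDet x c < 0) := by
    intro x hx
    have hx0 := (hFano.2.2 x hx).2.1
    constructor
    · simpa [hV] using exists_extremePoint_planeDet_pos hFano hx0
    · simpa [hV] using exists_extremePoint_planeDet_neg hFano hx0
  have haa : planeDet a a = 0 := by simp only [planeDet]; ring
  have hbb : planeDet b b = 0 := by simp only [planeDet]; ring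
  have hba : planeDet b a = -planeDet a b := by simp only [planeDet]; ring
  have hsa := hsign a ha
  have hsb := hsign b hb
  rw [haa] at hsa
  rw [hbb, hba] at hsb
  have hab : planeDet a b ≠ 0 := by
    intro h
    rw [h] at hsa
    rcases hsa with ⟨h1 | h1 | h1, h2 | h2 | h2⟩ <;> linarith
  have hac : planeDet a c ≠ 0 := by
    intro h
    rw [h] at hsa
    rcases hsa with ⟨h1 | h1 | h1, h2 | h2 | h2⟩ <;> linarith
  have hbc : planeDet b c ≠ 0 := by
    intro h
    rw [h] at hsb
    rcases hsb with ⟨h1 | h1 | h1, h2 | h2 | h2⟩ <;> linarith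
  have hab1 := planeDet_eq_one_or_neg_one hFano hTerm ha hb hab
  have hac1 := planeDet_eq_one_or_neg_one hFano hTerm ha hc hac
  have hbc1 := planeDet_eq_one_or_neg_one hFano hTerm hb hc hbc
  have hac2 : planeDet a c = -planeDet a b := by
    rcases hab1 with h | h <;> rcases hac1 with h' | h' <;>
      rw [h, h'] at hsa ⊢ <;>
      first | norm_num; done | norm_num at hsa
  have hbc2 : planeDet c b = -planeDet a b := by
    rw [show planeDet c b = -planeDet b c by simp only [planeDet]; ring]
    rcases hab1 with h | h <;> rcases hbc1 with h' | h' <;>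
      rw [h, h'] at hsb ⊢ <;>
      first | norm_num; done | norm_num at hsb
  have hceq := eq_smul_add_smul_of_planeDet_ne_zero hab c
  rw [hac2, hbc2, neg_div, div_self hab] at hceq
  obtain ⟨g, hg, hst⟩ :=
    exists_unimodular_standardizing (hFano.2.2 a ha).1 (hFano.2.2 b hb).1 hab1
  refine ⟨g, hg, ?_⟩
  have h1 := hst 1 0
  have h2 := hst 0 1
  have h3 := hst (-1) (-1)
  rw [← hceq] at h3
  simp only [one_smul, zero_smul, add_zero, zero_add] at h1 h2
  rw [image_mulVec_eq_convexHull hFano.1, hV, nablaInf]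
  simp only [image_insert_eq, image_singleton, h1, h2, h3]

/-- The base of a one-dimensional fiber structure has at most two elements. -/
theorem ncard_primitive_quotient_le_two {L : Submodule ℝ (Fin 2 → ℝ)} {v u : Fin 2 → ℝ}
    (hv : v ∈ L) (hu : IsLatticePoint u)
    (hspan : ∀ x, IsLatticePoint x → ∃ m n : ℤ, x = (m : ℝ) • v + (n : ℝ) • u)
    {B : Set ((Fin 2 → ℝ) ⧸ L)}
    (hB : ∀ w ∈ B, IsPrimitiveIn (L.mkQ '' {x | IsLatticePoint x}) w) : B.ncard ≤ 2 := by
  have hsub : B ⊆ {L.mkQ u, -L.mkQ u} := by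
    intro w hw
    obtain ⟨⟨x, hx, rfl⟩, -, hprim⟩ := hB w hw
    obtain ⟨m, n, rfl⟩ := hspan x hx
    have hv0 : L.mkQ v = 0 := by simpa using hv
    rw [map_add, map_smul, map_smul, hv0, smul_zero, zero_add] at hprim ⊢
    rcases le_total 0 n with hn | hn
    · lift n to ℕ using hn
      have h := hprim n (L.mkQ u) ⟨u, hu, rfl⟩ (by simp [Nat.cast_smul_eq_nsmul])
      simp [h]
    · obtain ⟨k, rfl⟩ := Int.exists_eq_neg_ofNat hn
      have hneg : IsLatticePoint (-u) := by simpa using hu.zsmul (-1)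
      have h := hprim k (L.mkQ (-u)) ⟨-u, hneg, rfl⟩ (by simp [Nat.cast_smul_eq_nsmul])
      simp [h]
  exact (ncard_le_ncard hsub (toFinite _)).trans ((ncard_insert_le _ _).trans (by simp))

/-- Four vertices, two of them opposite, span one of the two terminal quadrilaterals. -/
theorem exists_image_eq_nabla {P : Set (Fin 2 → ℝ)} (hFano : IsFanoPolytope P)
    (hTerm : IsTerminal P) {v u w : Fin 2 → ℝ} (hV : extremePoints ℝ P = {v, u, -v, w})
    (hu : planeDet v u = 1) (hw : planeDet v w = -1) :
    ∃ g : Matrix (Fin 2) (Fin 2) ℤ, IsUnit g.det ∧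
      ((fun x => (g.map (Int.cast : ℤ → ℝ)).mulVec x) '' P = nabla 0 ∨
       (fun x => (g.map (Int.cast : ℤ → ℝ)).mulVec x) '' P = nabla 1) := by
  have hvV : v ∈ extremePoints ℝ P := by simp [hV]
  have huV : u ∈ extremePoints ℝ P := by simp [hV]
  have hwV : w ∈ extremePoints ℝ P := by simp [hV]
  have hvl := (hFano.2.2 v hvV).1
  have hul := (hFano.2.2 u huV).1
  have hweq := eq_smul_add_smul_of_planeDet_ne_zero (a := v) (b := u) (by simp [hu]) w
  simp only [hu, hw, div_one] at hweq
  have hcases : planeDet w u = 0 ∨ planeDet w u = 1 ∨ planeDet w u = -1 := by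
    by_cases h : planeDet w u = 0
    · exact .inl h
    · exact .inr (planeDet_eq_one_or_neg_one hFano hTerm hwV huV h)
  rcases hcases with h | h | h <;> rw [h] at hweq
  · obtain ⟨g, hg, hst⟩ := exists_unimodular_standardizing hvl hul (.inl hu)
    refine ⟨g, hg, .inl ?_⟩
    have h1 := hst 1 0
    have h2 := hst 0 1
    have h3 := hst (-1) 0
    have h4 := hst 0 (-1)
    rw [← hweq] at h4
    simp only [one_smul, zero_smul, add_zero, zero_add, neg_smul] at h1 h2 h3
    rw [image_mulVec_eq_convexHull hFano.1, hV, nabla]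
    simp only [image_insert_eq, image_singleton, h1, h2, h3, h4, Nat.cast_zero, neg_zero]
  · have hvl' : IsLatticePoint (-v) := by simpa using hvl.zsmul (-1)
    have hneg : planeDet (-v) u = -1 := by
      rw [← hu]; simp only [planeDet, Pi.neg_apply]; ring
    obtain ⟨g, hg, hst⟩ := exists_unimodular_standardizing hvl' hul (.inr hneg)
    refine ⟨g, hg, .inr ?_⟩
    have h1 := hst 1 0
    have h2 := hst 0 1
    have h3 := hst (-1) 0
    have h4 := hst (-1) (-1)
    rw [show (-1 : ℝ) • -v = (1 : ℝ) • v by simp, ← hweq] at h4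
    simp only [one_smul, zero_smul, add_zero, zero_add, neg_smul, neg_neg] at h1 h2 h3
    rw [image_mulVec_eq_convexHull hFano.1, hV, nabla]
    simp only [image_insert_eq, image_singleton, h1, h2, h3, h4, Nat.cast_one]
    congr 1
    grind
  · obtain ⟨g, hg, hst⟩ := exists_unimodular_standardizing hvl hul (.inl hu)
    refine ⟨g, hg, .inr ?_⟩
    have h1 := hst 1 0
    have h2 := hst 0 1
    have h3 := hst (-1) 0
    have h4 := hst (-1) (-1)
    rw [← hweq] at h4
    simp only [one_smul, zero_smul, add_zero, zero_add, neg_smul] at h1 h2 h3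
    rw [image_mulVec_eq_convexHull hFano.1, hV, nabla]
    simp only [image_insert_eq, image_singleton, h1, h2, h3, h4, Nat.cast_one]

/-- The fiber of a one-dimensional fiber structure consists of two points on opposite rays. -/
theorem exists_neg_smul_eq_of_generates {v v' : Fin 2 → ℝ} (hv : v ≠ 0)
    (hgen : ∃ s : Finset (Fin 2 → ℝ), (s : Set (Fin 2 → ℝ)) ⊆ {v, v'} ∧
      ∃ c : (Fin 2 → ℝ) → ℝ, (∀ x, 0 ≤ c x) ∧ -v = ∑ x ∈ s, c x • x) :
    ∃ k : ℝ, 0 < k ∧ v = (-k) • v' := by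
  obtain ⟨s, hs, c, hc, hsum⟩ := hgen
  have hpq : ∃ p q : ℝ, 0 ≤ p ∧ 0 ≤ q ∧ -v = p • v + q • v' := by
    have hs' : s = ∅ ∨ s = {v} ∨ s = {v'} ∨ s = {v, v'} := by
      exact_mod_cast subset_pair_iff_eq.1 hs
    rcases hs' with rfl | rfl | rfl | rfl
    · exact absurd (by simpa using hsum) hv
    · exact ⟨c v, 0, hc v, le_rfl, by simpa using hsum⟩
    · exact ⟨0, c v', le_rfl, hc v', by simpa using hsum⟩
    · by_cases hvv' : v = v'
      · subst hvv'
        exact ⟨c v, 0, hc v, le_rfl, by simpa using hsum⟩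
      · exact ⟨c v, c v', hc v, hc v', by rwa [Finset.sum_pair hvv'] at hsum⟩
  obtain ⟨p, q, hp, hq, h⟩ := hpq
  have hv' : v = (-(q / (1 + p))) • v' := by
    have h1 : (1 + p) • v = (-q) • v' := by
      linear_combination (norm := module) -h
    rw [← neg_div, div_eq_inv_mul, mul_smul, ← h1, smul_smul,
      inv_mul_cancel₀ (by positivity), one_smul]
  refine ⟨q / (1 + p), ?_, hv'⟩
  rcases hq.eq_or_lt with rfl | hq
  · exact absurd (by simpa using hv') hv
  · positivity

/-- Up to the action of `GL(2,ℤ)`, every terminal Fano polygon admitting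
a Mori fiber structure is one of `∇_{-∞}`, `∇_0`, `∇_1`. -/
theorem terminal_mori_fiber_classification (P : Set (Fin 2 → ℝ))
    (hFano : IsFanoPolytope P) (hTerm : IsTerminal P)
    (hMfs : HasMoriFiberStructure P) :
    ∃ g : Matrix (Fin 2) (Fin 2) ℤ, IsUnit g.det ∧
      ((fun x => (g.map (Int.cast : ℤ → ℝ)).mulVec x) '' P = nablaInf ∨
       (fun x => (g.map (Int.cast : ℤ → ℝ)).mulVec x) '' P = nabla 0 ∨
       (fun x => (g.map (Int.cast : ℤ → ℝ)).mulVec x) '' P = nabla 1) := by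
  obtain ⟨Af, hsub, hne, -, hgen, hfib, hirr⟩ := hMfs
  rw [primPts_eq_extremePoints hFano hTerm] at hsub hirr
  have hnz : ∀ x ∈ Af, x ≠ 0 := fun x hx => (hFano.2.2 x (hsub hx)).2.1
  have hdim : Module.finrank ℝ (Submodule.span ℝ Af) ≤ 2 := by
    simpa using Submodule.finrank_le (Submodule.span ℝ Af)
  interval_cases hr : Module.finrank ℝ (Submodule.span ℝ Af)
  · obtain ⟨x, hx⟩ := hne
    have hx' := Submodule.subset_span (R := ℝ) hx
    rw [Submodule.finrank_eq_zero.1 hr] at hx'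
    exact absurd (by simpa using hx') (hnz x hx)
  · obtain ⟨v, v', -, rfl⟩ := ncard_eq_two.1 hfib
    have hvV : v ∈ extremePoints ℝ P := hsub (by simp)
    have hv'V : v' ∈ extremePoints ℝ P := hsub (by simp)
    have hv0 : v ≠ 0 := hnz v (by simp)
    have hvL : v ∈ Submodule.span ℝ {v, v'} := Submodule.subset_span (by simp)
    obtain ⟨k, hk, hvv'⟩ := exists_neg_smul_eq_of_generates hv0 (hgen (-v) (neg_mem hvL))
    obtain ⟨u, huV, hu⟩ := exists_extremePoint_planeDet_pos hFano hv0
    obtain ⟨w, hwV, hw⟩ := exists_extremePoint_planeDet_neg hFano hv0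
    have hdet : ∀ x, planeDet v x = -k * planeDet v' x := fun x => by
      rw [hvv']; simp only [planeDet, Pi.smul_apply, smul_eq_mul]; ring
    have hu1 : planeDet v u = 1 := by
      rcases planeDet_eq_one_or_neg_one hFano hTerm hvV huV hu.ne' with h | h <;> linarith
    have hw1 : planeDet v w = -1 := by
      rcases planeDet_eq_one_or_neg_one hFano hTerm hvV hwV hw.ne with h | h <;> linarith
    have hk1 : k = 1 := by
      have h := hdet u
      have h' : planeDet v' u ≠ 0 := by
        intro h'
        rw [h'] at h
        linarith
      rcases planeDet_eq_one_or_neg_one hFano hTerm hv'V huV h' with h'' | h'' <;>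
        rw [hu1, h''] at h <;> linarith
    have hneg : v' = -v := by rw [hvv', hk1]; simp
    subst hneg
    have hbase := ncard_primitive_quotient_le_two hvL (hFano.2.2 u huV).1
      (fun x hx => exists_int_coeff_of_isTerminal hFano hTerm hvV huV hu.ne' hx)
      (B := {w | IsPrimitiveIn _ w ∧ ∃ x ∈ extremePoints ℝ P \ {v, -v}, ∃ t : ℝ, 0 < t ∧
        (Submodule.span ℝ {v, -v}).mkQ x = t • w})
      (fun w hw => hw.1)
    have hcard : (extremePoints ℝ P).ncard ≤ 4 := by
      rw [hirr, hfib]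
      exact Nat.add_le_add_left hbase 2
    have hvv : planeDet v v = 0 := by simp only [planeDet]; ring
    have hvn : planeDet v (-v) = 0 := by simp only [planeDet, Pi.neg_apply]; ring
    have hvu : v ≠ u := by rintro rfl; linarith
    have hvw : v ≠ w := by rintro rfl; linarith
    have huw : u ≠ w := by rintro rfl; linarith
    have hnu : u ≠ -v := by rintro rfl; linarith
    have hnw : -v ≠ w := by rintro rfl; linarith
    have hfour : ({v, u, -v, w} : Set (Fin 2 → ℝ)).ncard = 4 := by
      rw [ncard_insert_of_notMem, ncard_insert_of_notMem, ncard_pair hnw]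
      · simp [huw, hnu]
      · simp [hvu, hvw, self_eq_neg, hv0]
    have hfin : (extremePoints ℝ P).Finite := by
      obtain ⟨S, -, rfl⟩ := hFano.1
      exact S.finite_toSet.subset extremePoints_convexHull_subset
    have hV : extremePoints ℝ P = {v, u, -v, w} := by
      refine (eq_of_subset_of_ncard_le ?_ (by omega) hfin).symm
      rintro x (rfl | rfl | rfl | rfl) <;> assumption
    obtain ⟨g, hg, h⟩ := exists_image_eq_nabla hFano hTerm hV hu1 hw1
    exact ⟨g, hg, .inr h⟩
  · have htop : Submodule.span ℝ Af = ⊤ := Submodule.eq_top_of_finrank_eq (by simpa using hr)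
    have hss : Subsingleton ((Fin 2 → ℝ) ⧸ Submodule.span ℝ Af) :=
      Submodule.Quotient.subsingleton_iff.2 htop
    have hcard : (extremePoints ℝ P).ncard = 3 := by
      rw [hirr, hfib, Nat.add_eq_left, ncard_eq_zero (toFinite _)]
      exact eq_empty_of_forall_notMem fun w hw => hw.1.2.1 (Subsingleton.elim _ _)
    obtain ⟨g, hg, h⟩ := exists_image_eq_nablaInf hFano hTerm hcard
    exact ⟨g, hg, .inl h⟩
end
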